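/- Let p be an odd prime and k an odd prime with k | (p−1). The number of subgroups of order k in PSL_2(F_p) is (p² + p)/2. -/

import Mathlib

/-- `PSL₂(𝔽ₚ)`, the quotient of `SL₂(𝔽ₚ)` by its center `{±I₂}`. -/
abbrev PSL (p : ℕ) :=
  Matrix.SpecialLinearGroup (Fin 2) (ZMod p) ⧸
    Subgroup.center (Matrix.SpecialLinearGroup (Fin 2) (ZMod p))

/-!
Write `q` for the order of the field `F`. For `k` odd, reduction modulo the center, whose elements
square to `1`, is a bijection from the elements of order `k` of `SL₂(F)` onto those of `PSL₂(F)`,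
and each cyclic subgroup of order `k` contains `φ k` of them. It remains to count pairs `(A, z)`
with `A ∈ SL₂(F)` and `z ∈ Fˣ` of order `k` and `tr A = z + z⁻¹`, that is, with `z` an eigenvalue
of `A`. As `k ∣ q - 1`, each `A` occurs with exactly two values, `z` and `z⁻¹`. Each `z` occurs
with all `q² + q` matrices of trace `z + z⁻¹`: if the upper right entry is nonzero, it and the
upper left entry determine the matrix, and otherwise the matrix is triangular with diagonal
`(z, z⁻¹)` or `(z⁻¹, z)`. Hence twice the number of elements of order `k` is `φ k * (q² + q)`.
-/

open Matrix Polynomial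
open scoped MatrixGroups Nat

section ElementsOfGivenOrder

variable {G : Type*} [Group G]

theorem sq_ne_one_of_odd_orderOf {g : G} (hodd : Odd (orderOf g)) (hne : orderOf g ≠ 1) :
    g ^ 2 ≠ 1 := fun hsq =>
  hne <| hodd.coprime_two_right.eq_one_of_dvd (orderOf_dvd_of_pow_eq_one hsq)

theorem ne_inv_of_odd_orderOf {g : G} (hodd : Odd (orderOf g)) (hne : orderOf g ≠ 1) :
    g ≠ g⁻¹ := by
  rw [Ne, ← mul_eq_one_iff_eq_inv, ← sq]
  exact sq_ne_one_of_odd_orderOf hodd hne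

theorem card_generators_eq_totient (H : Subgroup G) [Finite H] [IsCyclic H] :
    Nat.card {g : G // Subgroup.zpowers g = H} = φ (Nat.card H) := by
  classical
  have := Fintype.ofFinite H
  have zpowers_eq_iff (g : G) :
      Subgroup.zpowers g = H ↔ ∃ hg : g ∈ H, orderOf (⟨g, hg⟩ : H) = Nat.card H := by
    constructor
    · rintro rfl
      exact ⟨Subgroup.mem_zpowers g, by rw [Subgroup.orderOf_mk, Nat.card_zpowers]⟩
    · rintro ⟨hg, hord⟩
      refine Subgroup.eq_of_le_of_card_ge (by simpa using hg) ?_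
      rw [← hord, Subgroup.orderOf_mk, Nat.card_zpowers]
  rw [Nat.card_congr <| (Equiv.subtypeEquivRight zpowers_eq_iff).trans
    (Equiv.subtypeSubtypeEquivSubtypeExists (· ∈ H) fun h => orderOf h = Nat.card H).symm,
    Nat.card_eq_fintype_card, Nat.card_eq_fintype_card, Fintype.card_subtype]
  exact IsCyclic.card_orderOf_eq_totient dvd_rfl

theorem card_orderOf_eq_mul_card_isCyclic [Finite G] (k : ℕ) :
    Nat.card {g : G // orderOf g = k} =
      Nat.card {H : Subgroup G // IsCyclic H ∧ Nat.card H = k} * φ k := by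
  classical
  have := Fintype.ofFinite {H : Subgroup G // IsCyclic H ∧ Nat.card H = k}
  let span (g : {g : G // orderOf g = k}) : {H : Subgroup G // IsCyclic H ∧ Nat.card H = k} :=
    ⟨Subgroup.zpowers g.1, inferInstance, by rw [Nat.card_zpowers, g.2]⟩
  have card_fiber (H) : Nat.card {g // span g = H} = φ k := by
    obtain ⟨H, hcyc, rfl⟩ := H
    rw [← card_generators_eq_totient H]
    refine Nat.card_congr ((Equiv.subtypeEquivRight fun g => Subtype.ext_iff).trans <|
      Equiv.subtypeSubtypeEquivSubtype (p := fun g : G => orderOf g = Nat.card H)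
        (q := fun g => Subgroup.zpowers g = H) ?_)
    rintro g rfl
    rw [Nat.card_zpowers]
  rw [← Nat.card_congr (Equiv.sigmaFiberEquiv span), Nat.card_sigma]
  simp only [card_fiber, Finset.sum_const, Finset.card_univ, smul_eq_mul, Nat.card_eq_fintype_card]

variable {N : Subgroup G} {e k : ℕ}

theorem quotientGroupMk_injOn_of_coprime (hcen : N ≤ Subgroup.center G)
    (hN : ∀ n ∈ N, n ^ e = 1) (hek : e.Coprime k) :
    Set.InjOn ((↑) : G → G ⧸ N) {g | g ^ k = 1} := by
  intro g (hg : g ^ k = 1) h (hh : h ^ k = 1) hgh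
  have hn : g⁻¹ * h ∈ N := QuotientGroup.eq.mp hgh
  have hcomm : Commute g (g⁻¹ * h) := Subgroup.mem_center_iff.mp (hcen hn) g
  have hnk : (g⁻¹ * h) ^ k = 1 := by
    have hmul : (g * (g⁻¹ * h)) ^ k = g ^ k * (g⁻¹ * h) ^ k := hcomm.mul_pow k
    rwa [mul_inv_cancel_left, hg, hh, one_mul, eq_comm] at hmul
  have : g⁻¹ * h = 1 := by
    simpa [hek.gcd_eq_one] using pow_gcd_eq_one.mpr ⟨hN _ hn, hnk⟩
  exact inv_mul_eq_one.mp this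

variable [N.Normal]

theorem orderOf_quotientGroupMk_eq (hN : ∀ n ∈ N, n ^ e = 1) {g : G}
    (hg : e.Coprime (orderOf g)) : orderOf (g : G ⧸ N) = orderOf g := by
  refine Nat.dvd_antisymm (orderOf_map_dvd (QuotientGroup.mk' N) g)
    (hg.symm.dvd_of_dvd_mul_right ?_)
  rw [orderOf_dvd_iff_pow_eq_one, pow_mul]
  apply hN
  rw [← QuotientGroup.eq_one_iff, QuotientGroup.mk_pow, pow_orderOf_eq_one]

theorem exists_quotientGroupMk_eq_and_orderOf_eq (hN : ∀ n ∈ N, n ^ e = 1) (x : G ⧸ N)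
    (hx : e.Coprime (orderOf x)) : ∃ g : G, (g : G ⧸ N) = x ∧ orderOf g = orderOf x := by
  obtain ⟨m, hm⟩ := exists_pow_eq_self_of_coprime hx
  obtain ⟨b, rfl⟩ := QuotientGroup.mk_surjective x
  have hbN : b ^ orderOf (b : G ⧸ N) ∈ N := by
    rw [← QuotientGroup.eq_one_iff, QuotientGroup.mk_pow, pow_orderOf_eq_one]
  have hmk : (((b ^ e) ^ m : G) : G ⧸ N) = b := by simpa using hm
  refine ⟨(b ^ e) ^ m, hmk, Nat.dvd_antisymm (orderOf_dvd_of_pow_eq_one ?_) ?_⟩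
  · rw [pow_right_comm, pow_right_comm b, hN _ hbN, one_pow]
  · conv_lhs => rw [← hmk]
    exact orderOf_map_dvd (QuotientGroup.mk' N) _

theorem card_orderOf_quotient_eq (hcen : N ≤ Subgroup.center G) (hN : ∀ n ∈ N, n ^ e = 1)
    (hek : e.Coprime k) :
    Nat.card {x : G ⧸ N // orderOf x = k} = Nat.card {g : G // orderOf g = k} := by
  have hbij : Set.BijOn ((↑) : G → G ⧸ N) {g | orderOf g = k} {x | orderOf x = k} := by
    refine ⟨?_, (quotientGroupMk_injOn_of_coprime hcen hN hek).mono ?_, ?_⟩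
    · rintro g rfl
      exact orderOf_quotientGroupMk_eq hN hek
    · rintro g rfl
      exact pow_orderOf_eq_one g
    · rintro x rfl
      obtain ⟨g, hgx, hg⟩ := exists_quotientGroupMk_eq_and_orderOf_eq hN x hek
      exact ⟨g, hg, hgx⟩
  exact (Nat.card_congr (Set.BijOn.equiv _ hbij)).symm

end ElementsOfGivenOrder

section AddInv

variable {R : Type*} [CommRing R] [IsDomain R]

theorem add_inv_eq_add_inv_iff {w z : Rˣ} :
    (w + ↑w⁻¹ : R) = z + ↑z⁻¹ ↔ w = z ∨ w = z⁻¹ := by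
  have factor : (w * ((w + ↑w⁻¹) - (z + ↑z⁻¹)) : R) = (w - z) * (w - ↑z⁻¹) := by
    linear_combination w.mul_inv - z.mul_inv
  rw [← sub_eq_zero, ← mul_eq_zero_iff_left w.ne_zero, factor, mul_eq_zero, sub_eq_zero,
    sub_eq_zero, Units.val_inj, Units.val_inj]

theorem card_add_inv_eq_add_inv {z : Rˣ} (hz : z ≠ z⁻¹) :
    Nat.card {w : Rˣ // (w + ↑w⁻¹ : R) = z + ↑z⁻¹} = 2 := by
  simp only [add_inv_eq_add_inv_iff]
  exact Set.ncard_pair hz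

end AddInv

section Center

variable {n R : Type*} [Fintype n] [DecidableEq n] [CommRing R] {A : Matrix.SpecialLinearGroup n R}

theorem coe_mem_range_algebraMap_iff_mem_center :
    A.1 ∈ (algebraMap R (Matrix n n R)).range ↔
      A ∈ Subgroup.center (Matrix.SpecialLinearGroup n R) := by
  rw [Matrix.SpecialLinearGroup.mem_center_iff]
  constructor
  · rintro ⟨r, hr⟩
    refine ⟨r, ?_, hr⟩
    rw [← A.det_coe, ← hr]
    simp [algebraMap_eq_diagonal]
  · rintro ⟨r, -, hr⟩
    exact ⟨r, hr⟩

theorem pow_card_eq_one_of_mem_center (hA : A ∈ Subgroup.center (Matrix.SpecialLinearGroup n R)) :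
    A ^ Fintype.card n = 1 := by
  obtain ⟨r, hr, hrA⟩ := Matrix.SpecialLinearGroup.mem_center_iff.mp hA
  apply Subtype.ext
  rw [Matrix.SpecialLinearGroup.coe_pow, ← hrA, ← map_pow, hr, map_one,
    Matrix.SpecialLinearGroup.coe_one]

end Center

section TraceFiber

variable {R : Type*} [CommRing R] {F : Type*} [Field F]

theorem card_trace_eq_and_upper_eq_zero (t : R) :
    Nat.card {A : SL(2, R) // A.1.trace = t ∧ A.1 0 1 = 0} =
      Nat.card R * Nat.card {z : Rˣ // z + ↑z⁻¹ = t} := by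
  rw [← Nat.card_prod]
  symm
  refine Nat.card_eq_of_bijective (fun x => ⟨⟨!![(x.2.1 : R), 0; x.1, ↑x.2.1⁻¹], by simp⟩,
    (trace_fin_two_of ..).trans x.2.2, rfl⟩) ⟨?_, ?_⟩
  · rintro ⟨c, z, hz⟩ ⟨c', z', hz'⟩ h
    have h00 : (z : R) = z' := congrArg (fun A => A.1.1 0 0) h
    have h10 : c = c' := congrArg (fun A => A.1.1 1 0) h
    obtain rfl := Units.ext h00
    rw [h10]
  · rintro ⟨A, htr, hA⟩
    have hdet : A.1 0 0 * A.1 1 1 = 1 := by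
      have := A.det_coe
      rwa [det_fin_two, hA, zero_mul, sub_zero] at this
    rw [trace_fin_two] at htr
    refine ⟨(A.1 1 0, ⟨⟨A.1 0 0, A.1 1 1, hdet, mul_comm (A.1 0 0) _ ▸ hdet⟩, htr⟩), ?_⟩
    ext i j
    fin_cases i <;> fin_cases j <;> simp [hA]

theorem card_trace_eq_and_upper_ne_zero (t : F) :
    Nat.card {A : SL(2, F) // A.1.trace = t ∧ A.1 0 1 ≠ 0} = Nat.card F * (Nat.card F - 1) := by
  rw [← Nat.card_units, ← Nat.card_prod]
  refine Nat.card_eq_of_bijective (fun A => (A.1 0 0, Units.mk0 (A.1 0 1) A.2.2)) ⟨?_, ?_⟩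
  · rintro ⟨A, hA, hA0⟩ ⟨B, hB, hB0⟩ hAB
    obtain ⟨h00, h01⟩ : A.1 0 0 = B.1 0 0 ∧ A.1 0 1 = B.1 0 1 := by
      simpa [← Units.val_inj] using hAB
    have h11 : A.1 1 1 = B.1 1 1 := by
      rw [trace_fin_two] at hA hB
      linear_combination hA - hB - h00
    have h10 : A.1 1 0 = B.1 1 0 := by
      refine mul_left_cancel₀ hA0 ?_
      have hdet := A.2.trans B.2.symm
      rw [det_fin_two, det_fin_two] at hdet
      linear_combination h00 * A.1 1 1 + B.1 0 0 * h11 - hdet - h01 * B.1 1 0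
    ext i j
    fin_cases i <;> fin_cases j <;> assumption
  · rintro ⟨a, b⟩
    have hdet : det !![a, (b : F); (a * (t - a) - 1) * ↑b⁻¹, t - a] = 1 := by
      rw [det_fin_two_of]
      linear_combination (1 - a * (t - a)) * b.mul_inv
    refine ⟨⟨⟨_, hdet⟩, ?_, b.ne_zero⟩, Prod.ext rfl (Units.ext rfl)⟩
    exact (trace_fin_two_of ..).trans (add_sub_cancel a t)

theorem card_trace_eq [Finite F] (t : F) :
    Nat.card {A : SL(2, F) // A.1.trace = t} =
      Nat.card F * (Nat.card {z : Fˣ // z + ↑z⁻¹ = t} + (Nat.card F - 1)) := by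
  classical
  rw [← Nat.card_congr (Equiv.sumCompl fun A : {A : SL(2, F) // A.1.trace = t} => A.1 0 1 = 0),
    Nat.card_sum,
    Nat.card_congr (Equiv.subtypeSubtypeEquivSubtypeInter _ fun A : SL(2, F) => A.1 0 1 = 0),
    Nat.card_congr (Equiv.subtypeSubtypeEquivSubtypeInter _ fun A : SL(2, F) => ¬A.1 0 1 = 0),
    card_trace_eq_and_upper_eq_zero, card_trace_eq_and_upper_ne_zero, mul_add]

theorem card_trace_eq_add_inv [Finite F] {z : Fˣ} (hz : z ≠ z⁻¹) :
    Nat.card {A : SL(2, F) // A.1.trace = z + ↑z⁻¹} = Nat.card F ^ 2 + Nat.card F := by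
  rw [card_trace_eq, card_add_inv_eq_add_inv hz]
  obtain ⟨m, hm⟩ : ∃ m, Nat.card F = m + 1 := Nat.exists_eq_succ_of_ne_zero Nat.card_pos.ne'
  rw [hm, Nat.add_sub_cancel]
  ring

end TraceFiber

section Eigenvalues

variable {R : Type*} [CommRing R] {F : Type*} [Field F]

theorem charpoly_eq_of_trace_eq_add_inv [Nontrivial R] {A : SL(2, R)} {z : Rˣ}
    (htr : A.1.trace = z + ↑z⁻¹) : A.1.charpoly = (X - C (z : R)) * (X - C (↑z⁻¹ : R)) := by
  have hz : (C (z : R)) * C (↑z⁻¹ : R) = 1 := by rw [← C_mul, z.mul_inv, C_1]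
  rw [charpoly_fin_two, htr, A.det_coe, C_add, C_1]
  linear_combination -hz

theorem notMem_center_of_trace_eq_add_inv [IsDomain R] {A : SL(2, R)} {z : Rˣ} (hz : z ≠ z⁻¹)
    (htr : A.1.trace = z + ↑z⁻¹) : A ∉ Subgroup.center SL(2, R) := by
  intro hA
  obtain ⟨r, hr, hrA⟩ := Matrix.SpecialLinearGroup.mem_center_iff.mp hA
  let u : Rˣ := ⟨r, r, by rwa [← sq], by rwa [← sq]⟩
  have htru : (z + ↑z⁻¹ : R) = u + ↑u⁻¹ := by
    rw [← htr, ← hrA, trace_fin_two]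
    rfl
  have hzu : z = u := (add_inv_eq_add_inv_iff.mp htru).elim id id
  exact hz (hzu ▸ rfl)

theorem minpoly_eq_charpoly_of_notMem_range {A : Matrix (Fin 2) (Fin 2) F}
    (hA : A ∉ (algebraMap F (Matrix (Fin 2) (Fin 2) F)).range) : minpoly F A = A.charpoly := by
  have hint : IsIntegral F A := Matrix.isIntegral A
  have hdeg : 2 ≤ (minpoly F A).natDegree := by
    have h0 := minpoly.natDegree_pos hint
    have h1 := mt minpoly.natDegree_eq_one_iff.mp hA
    lia
  refine (eq_of_monic_of_dvd_of_natDegree_le (minpoly.monic hint) A.charpoly_monic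
    A.minpoly_dvd_charpoly ?_).symm
  rwa [charpoly_natDegree_eq_dim, Fintype.card_fin]

theorem pow_eq_one_iff_charpoly_dvd {A : SL(2, F)} (hA : A ∉ Subgroup.center SL(2, F)) {n : ℕ} :
    A ^ n = 1 ↔ A.1.charpoly ∣ X ^ n - 1 := by
  rw [← coe_mem_range_algebraMap_iff_mem_center] at hA
  rw [← minpoly_eq_charpoly_of_notMem_range hA, minpoly.dvd_iff, map_sub, map_pow, aeval_X, map_one,
    sub_eq_zero, ← Matrix.SpecialLinearGroup.coe_pow, ← Matrix.SpecialLinearGroup.coe_one]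
  exact Subtype.ext_iff

theorem orderOf_eq_of_trace_eq_add_inv {A : SL(2, F)} {z : Fˣ} (hz : z ≠ z⁻¹)
    (htr : A.1.trace = z + ↑z⁻¹) : orderOf A = orderOf z := by
  have hcop : IsCoprime (X - C (z : F)) (X - C (↑z⁻¹ : F)) :=
    isCoprime_X_sub_C_of_isUnit_sub (sub_ne_zero.mpr (Units.val_injective.ne hz)).isUnit
  refine orderOf_eq_orderOf_iff.mpr fun n => ?_
  rw [pow_eq_one_iff_charpoly_dvd (notMem_center_of_trace_eq_add_inv hz htr),
    charpoly_eq_of_trace_eq_add_inv htr]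
  have hroot (w : Fˣ) : X - C (w : F) ∣ X ^ n - 1 ↔ w ^ n = 1 := by
    simp [dvd_iff_isRoot, sub_eq_zero, ← Units.val_inj]
  refine ⟨fun h => (hroot z).mp (dvd_of_mul_right_dvd h), fun h => hcop.mul_dvd ?_ ?_⟩
  · exact (hroot z).mpr h
  · exact (hroot z⁻¹).mpr (by rw [inv_pow, h, inv_one])

theorem splits_and_nodup_roots_of_dvd_X_pow_card_sub_X [Finite F] {f : F[X]}
    (hf : f ∣ X ^ Nat.card F - X) : f.Splits ∧ f.roots.Nodup := by
  have := Fintype.ofFinite F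
  have hroots := FiniteField.roots_X_pow_card_sub_X F
  rw [Nat.card_eq_fintype_card] at hf
  have hne : (X ^ Fintype.card F - X : F[X]) ≠ 0 :=
    FiniteField.X_pow_card_sub_X_ne_zero F Fintype.one_lt_card
  constructor
  · refine Splits.of_dvd (splits_iff_card_roots.mpr ?_) hne hf
    rw [hroots, FiniteField.X_pow_card_sub_X_natDegree_eq F Fintype.one_lt_card, Finset.card_val,
      Finset.card_univ]
  · exact Multiset.nodup_of_le (roots.le_of_dvd hne hf) (hroots ▸ Finset.univ.nodup)

theorem exists_trace_eq_add_inv [Finite F] {A : SL(2, F)} (hA : A ∉ Subgroup.center SL(2, F))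
    (hpow : A ^ (Nat.card F - 1) = 1) : ∃ z : Fˣ, z ≠ z⁻¹ ∧ A.1.trace = z + ↑z⁻¹ := by
  have hdvd : A.1.charpoly ∣ X ^ Nat.card F - X := by
    have : (X ^ Nat.card F - X : F[X]) = (X ^ (Nat.card F - 1) - 1) * X := by
      rw [sub_mul, one_mul, pow_sub_one_mul Nat.card_pos.ne']
    exact this ▸ ((pow_eq_one_iff_charpoly_dvd hA).mp hpow).mul_right X
  obtain ⟨hsplits, hnodup⟩ := splits_and_nodup_roots_of_dvd_X_pow_card_sub_X hdvd
  obtain ⟨x, y, hxy⟩ : ∃ x y, A.1.charpoly.roots = {x, y} := by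
    rw [← Multiset.card_eq_two, splits_iff_card_roots.mp hsplits, charpoly_natDegree_eq_dim,
      Fintype.card_fin]
  have hne : x ≠ y := by simpa [hxy] using hnodup
  have htr : A.1.trace = x + y := by
    simpa [hxy] using trace_eq_sum_roots_charpoly_of_splits hsplits
  have hdet : x * y = 1 := by
    simpa [hxy] using (det_eq_prod_roots_charpoly_of_splits hsplits).symm
  exact ⟨⟨x, y, hdet, mul_comm x y ▸ hdet⟩, fun h => hne (congrArg Units.val h), htr⟩

theorem exists_trace_eq_add_inv_and_orderOf_eq [Finite F] {A : SL(2, F)}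
    (hodd : Odd (orderOf A)) (hne : orderOf A ≠ 1) (hdvd : orderOf A ∣ Nat.card F - 1) :
    ∃ z : Fˣ, z ≠ z⁻¹ ∧ orderOf z = orderOf A ∧ A.1.trace = z + ↑z⁻¹ := by
  have hcen : A ∉ Subgroup.center SL(2, F) := fun h =>
    sq_ne_one_of_odd_orderOf hodd hne (pow_card_eq_one_of_mem_center h)
  obtain ⟨z, hz, htr⟩ := exists_trace_eq_add_inv hcen (orderOf_dvd_iff_pow_eq_one.mp hdvd)
  exact ⟨z, hz, (orderOf_eq_of_trace_eq_add_inv hz htr).symm, htr⟩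

theorem card_orderOf_specialLinearGroup_mul_two [Finite F] {k : ℕ} (hk : Odd k) (hk1 : k ≠ 1)
    (hdvd : k ∣ Nat.card F - 1) :
    Nat.card {A : SL(2, F) // orderOf A = k} * 2 = φ k * (Nat.card F ^ 2 + Nat.card F) := by
  classical
  have := Fintype.ofFinite F
  have := Fintype.ofFinite SL(2, F)
  have card_units_orderOf : Finset.card {z : Fˣ | orderOf z = k} = φ k :=
    IsCyclic.card_orderOf_eq_totient (by rwa [← Nat.card_eq_fintype_card, Nat.card_units])
  rw [Nat.card_eq_fintype_card, Fintype.card_subtype, ← card_units_orderOf]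
  refine Finset.card_mul_eq_card_mul (fun (A : SL(2, F)) (z : Fˣ) => A.1.trace = z + ↑z⁻¹)
    (fun A hA => ?_) (fun z hz => ?_)
  · obtain rfl : orderOf A = k := by simpa only [Finset.mem_filter_univ] using hA
    obtain ⟨z, hz, hzA, htr⟩ := exists_trace_eq_add_inv_and_orderOf_eq hk hk1 hdvd
    have eigenvalues : Finset.bipartiteAbove (fun (A : SL(2, F)) (z : Fˣ) => A.1.trace = z + ↑z⁻¹)
        {z | orderOf z = orderOf A} A = {z, z⁻¹} := by
      ext w
      simp only [Finset.mem_bipartiteAbove, Finset.mem_filter_univ, Finset.mem_insert,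
        Finset.mem_singleton, htr, eq_comm (a := (z + ↑z⁻¹ : F)), add_inv_eq_add_inv_iff]
      refine and_iff_right_of_imp ?_
      rintro (rfl | rfl)
      · exact hzA
      · rw [orderOf_inv, hzA]
    exact eigenvalues ▸ Finset.card_pair hz
  · obtain rfl : orderOf z = k := by simpa only [Finset.mem_filter_univ] using hz
    have hne := ne_inv_of_odd_orderOf hk hk1
    rw [← card_trace_eq_add_inv hne, Nat.card_eq_fintype_card, Fintype.card_subtype,
      Finset.bipartiteBelow, Finset.filter_filter]
    refine congrArg Finset.card (Finset.filter_congr fun A _ => and_iff_right_of_imp fun htr => ?_)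
    exact orderOf_eq_of_trace_eq_add_inv hne htr

end Eigenvalues

theorem stmt12_general {F : Type*} [Field F] [Finite F] {k : ℕ} (hk : Odd k) (hk1 : k ≠ 1)
    (hdvd : k ∣ Nat.card F - 1) :
    Nat.card {H : Subgroup (ProjectiveSpecialLinearGroup (Fin 2) F) //
      IsCyclic H ∧ Nat.card H = k} = (Nat.card F ^ 2 + Nat.card F) / 2 := by
  have hSL := card_orderOf_specialLinearGroup_mul_two hk hk1 hdvd
  rw [← card_orderOf_quotient_eq le_rfl (fun _ => pow_card_eq_one_of_mem_center)
    (by simpa using hk), card_orderOf_eq_mul_card_isCyclic, mul_right_comm, mul_comm] at hSL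
  have hφ : 0 < φ k := Nat.totient_pos.mpr hk.pos
  have := Nat.eq_of_mul_eq_mul_left hφ hSL
  exact (Nat.div_eq_of_eq_mul_left two_pos this.symm).symm

theorem stmt12 (p k : ℕ) [Fact p.Prime] [Fact k.Prime] (hp : Odd p) (hk : Odd k)
    (hdvd : k ∣ p - 1) :
    Nat.card {H : Subgroup (PSL p) // Nat.card H = k} = (p ^ 2 + p) / 2 := by
  have hcyc (H : Subgroup (PSL p)) : IsCyclic H ∧ Nat.card H = k ↔ Nat.card H = k :=
    and_iff_right_of_imp isCyclic_of_prime_card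
  simpa only [hcyc, Nat.card_zmod] using
    stmt12_general (F := ZMod p) hk (Fact.out : k.Prime).ne_one (by rwa [Nat.card_zmod])
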